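/- Let X be a Banach space, U an evolution operator on X, P a family of projectors compatible with U with complementary family Q and associated map V, and h, k growth rates. If (U,P) is (h,k)-dichotomic with nondecreasing function N, then the family of norms ‖x‖_t = sup_{τ ≥ t} (h(t)/h(τ))‖U(τ,t)P(t)x‖ + sup_{0 ≤ τ ≤ t} (k(τ)/k(t))‖V(t,τ)Q(t)x‖ satisfies h(t)‖U(t,s)P(s)x‖_t ≤ N(s)h(s)‖P(s)x‖_s and k(t)‖V(t,s)Q(t)x‖_s ≤ N(t)k(s)‖Q(t)x‖_t for all t ≥ s ≥ 0 and x ∈ X. -/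

import Mathlib

open Set Filter Real

variable {X : Type*} [NormedAddCommGroup X] [NormedSpace ℝ X] [CompleteSpace X]

/-- `U : Δ → B(X)` is an evolution operator on `X`. -/
def EvolutionOperator (U : ℝ → ℝ → X →L[ℝ] X) : Prop :=
  (∀ t : ℝ, 0 ≤ t → U t t = ContinuousLinearMap.id ℝ X) ∧
  (∀ t s t₀ : ℝ, 0 ≤ t₀ → t₀ ≤ s → s ≤ t → U t t₀ = (U t s).comp (U s t₀))

/-- `P : ℝ₊ → B(X)` is a family of projectors on `X`. -/
def ProjectorFamily (P : ℝ → X →L[ℝ] X) : Prop :=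
  ∀ t : ℝ, 0 ≤ t → (P t).comp (P t) = P t

/-- `P` is invariant for the evolution operator `U`. -/
def InvariantFor (U : ℝ → ℝ → X →L[ℝ] X) (P : ℝ → X →L[ℝ] X) : Prop :=
  ∀ t s : ℝ, 0 ≤ s → s ≤ t → ∀ x : X, U t s (P s x) = P t (U t s x)

/-- `P` is compatible with `U` : it is invariant for `U` and for every `t ≥ s ≥ 0`
the restriction of `U t s` to `Ker P s` is an isomorphism from `Ker P s` onto
`Ker P t` (a bounded bijection between these closed subspaces of the Banach
space `X`, hence an isomorphism). -/
def CompatibleWith (U : ℝ → ℝ → X →L[ℝ] X) (P : ℝ → X →L[ℝ] X) : Prop :=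
  InvariantFor U P ∧
  ∀ t s : ℝ, 0 ≤ s → s ≤ t →
    Set.BijOn (U t s) {x : X | P s x = 0} {x : X | P t x = 0}

/-- a growth rate : a nondecreasing map `ℝ₊ → [1, ∞)` tending to `∞`. -/
def GrowthRate (h : ℝ → ℝ) : Prop :=
  MonotoneOn h (Ici (0 : ℝ)) ∧ (∀ t : ℝ, 0 ≤ t → 1 ≤ h t) ∧ Tendsto h atTop atTop

/-- a nondecreasing map `ℝ₊ → [1, ∞)`. -/
def Nondecr1 (N : ℝ → ℝ) : Prop :=
  MonotoneOn N (Ici (0 : ℝ)) ∧ ∀ t : ℝ, 0 ≤ t → 1 ≤ N t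

/-- the pair `(U, P)` is (nonuniformly) `(h,k)`-dichotomic; here
`Q t x = x - P t x` is the complementary family of projectors. -/
def Dichotomic (U : ℝ → ℝ → X →L[ℝ] X) (P : ℝ → X →L[ℝ] X) (h k : ℝ → ℝ) : Prop :=
  ∃ N : ℝ → ℝ, Nondecr1 N ∧
    ∀ t s : ℝ, 0 ≤ s → s ≤ t → ∀ x : X,
      h t * ‖U t s (P s x)‖ ≤ N s * (h s * ‖P s x‖) ∧
      k t * ‖x - P s x‖ ≤ N t * (k s * ‖U t s (x - P s x)‖)

/-- the pair `(U, P)` has `(h,k)`-growth. -/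
def HasGrowth (U : ℝ → ℝ → X →L[ℝ] X) (P : ℝ → X →L[ℝ] X) (h k : ℝ → ℝ) : Prop :=
  ∃ M : ℝ → ℝ, Nondecr1 M ∧
    ∀ t s : ℝ, 0 ≤ s → s ≤ t → ∀ x : X,
      h s * ‖U t s (P s x)‖ ≤ M s * (h t * ‖P s x‖) ∧
      k s * ‖x - P s x‖ ≤ M t * (k t * ‖U t s (x - P s x)‖)

/-- `f : X → ℝ` is a norm on `X`. -/
def IsNormOn (f : X → ℝ) : Prop :=
  (∀ x : X, 0 ≤ f x) ∧ (∀ x : X, f x = 0 ↔ x = 0) ∧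
  (∀ (a : ℝ) (x : X), f (a • x) = |a| * f x) ∧
  (∀ x y : X, f (x + y) ≤ f x + f y)

/-- a family of norms `{‖·‖_t : t ≥ 0}` compatible with the family of
projectors `P` (with complementary family `Q t x = x - P t x`). -/
def CompatibleNorms (P : ℝ → X →L[ℝ] X) (nn : ℝ → X → ℝ) : Prop :=
  (∀ t : ℝ, 0 ≤ t → IsNormOn (nn t)) ∧
  ∃ N : ℝ → ℝ, Nondecr1 N ∧
    ∀ t : ℝ, 0 ≤ t → ∀ x : X,
      ‖x‖ ≤ nn t x ∧ nn t x ≤ N t * (‖P t x‖ + ‖x - P t x‖)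

/-- the Lyapunov type family of norms built from the `(h,k)`-growth property:
`‖x‖_t = sup_{τ ≥ t} (h t / h τ)‖U(τ,t)P(t)x‖ + sup_{0 ≤ τ ≤ t} (k τ / k t)‖V(t,τ)Q(t)x‖`. -/
noncomputable def lyapG (U V : ℝ → ℝ → X →L[ℝ] X) (P : ℝ → X →L[ℝ] X)
    (h k : ℝ → ℝ) (t : ℝ) (x : X) : ℝ :=
  (⨆ τ : Ici t, (h t / h (τ : ℝ)) * ‖U (τ : ℝ) t (P t x)‖) +
  (⨆ τ : Icc (0 : ℝ) t, (k (τ : ℝ) / k t) * ‖V t (τ : ℝ) (x - P t x)‖)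

/-- the Lyapunov type family of norms built from the `(h,k)`-dichotomy property:
`|||x|||_t = sup_{τ ≥ t} (h τ / h t)‖U(τ,t)P(t)x‖ + sup_{0 ≤ τ ≤ t} (k t / k τ)‖V(t,τ)Q(t)x‖`. -/
noncomputable def lyapD (U V : ℝ → ℝ → X →L[ℝ] X) (P : ℝ → X →L[ℝ] X)
    (h k : ℝ → ℝ) (t : ℝ) (x : X) : ℝ :=
  (⨆ τ : Ici t, (h (τ : ℝ) / h t) * ‖U (τ : ℝ) t (P t x)‖) +
  (⨆ τ : Icc (0 : ℝ) t, (k t / k (τ : ℝ)) * ‖V t (τ : ℝ) (x - P t x)‖)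

/-- On the range of `P t` only the forward supremum of `lyapG` survives. -/
theorem lyapG_of_apply_eq_self (U V : ℝ → ℝ → X →L[ℝ] X) (P : ℝ → X →L[ℝ] X) (h k : ℝ → ℝ)
    {t : ℝ} {x : X} (hx : P t x = x) :
    lyapG U V P h k t x = ⨆ τ : Ici t, (h t / h (τ : ℝ)) * ‖U (τ : ℝ) t x‖ := by
  simp [lyapG, hx]

/-- On the kernel of `P t` only the backward supremum of `lyapG` survives. -/
theorem lyapG_of_apply_eq_zero (U V : ℝ → ℝ → X →L[ℝ] X) (P : ℝ → X →L[ℝ] X) (h k : ℝ → ℝ)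
    {t : ℝ} {x : X} (hx : P t x = 0) :
    lyapG U V P h k t x = ⨆ τ : Icc (0 : ℝ) t, (k (τ : ℝ) / k t) * ‖V t (τ : ℝ) x‖ := by
  simp [lyapG, hx]

/-- If `a ≤ b`, the weight `a / b` may be dropped from a bound on `b * r`. -/
theorem mul_div_mul_le_of_le {a b r c : ℝ} (ha : 0 ≤ a) (hb : 0 < b) (hr : 0 ≤ r)
    (hab : a ≤ b) (hc : b * r ≤ c) : a * (a / b * r) ≤ c := by
  have hdiv : a / b ≤ 1 := (div_le_one hb).2 hab
  calc a * (a / b * r) ≤ b * (1 * r) := by gcongr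
    _ ≤ c := by rwa [one_mul]

theorem GrowthRate.pos {h : ℝ → ℝ} (hh : GrowthRate h) {t : ℝ} (ht : 0 ≤ t) : 0 < h t :=
  zero_lt_one.trans_le (hh.2.1 t ht)

theorem GrowthRate.mono {h : ℝ → ℝ} (hh : GrowthRate h) {s t : ℝ} (hs : 0 ≤ s) (hst : s ≤ t) :
    h s ≤ h t :=
  hh.1 hs (hs.trans hst) hst

/-- (from the proof of Theorem 3.10) : if `(U,P)` is `(h,k)`-dichotomic with
nondecreasing function `N`, then the family of norms `lyapG` satisfies
`(hd₁''')` and `(kd₂''')` with the same `N`. -/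
theorem stmt11 (U V : ℝ → ℝ → X →L[ℝ] X) (P : ℝ → X →L[ℝ] X) (h k : ℝ → ℝ)
    (hU : EvolutionOperator U) (hP : ProjectorFamily P) (hC : CompatibleWith U P)
    (hh : GrowthRate h) (hk : GrowthRate k)
    (hv1 : ∀ t s : ℝ, 0 ≤ s → s ≤ t → ∀ x : X, U t s (V t s (x - P t x)) = x - P t x)
    (hv2 : ∀ t s : ℝ, 0 ≤ s → s ≤ t → ∀ x : X, V t s (U t s (x - P s x)) = x - P s x)
    (hv3 : ∀ t s t₀ : ℝ, 0 ≤ t₀ → t₀ ≤ s → s ≤ t → ∀ x : X,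
      V t t₀ (x - P t x) = V s t₀ (V t s (x - P t x)))
    (hv4 : ∀ t s : ℝ, 0 ≤ s → s ≤ t → ∀ x : X,
      V t s (x - P t x) = V t s (x - P t x) - P s (V t s (x - P t x)))
    (N : ℝ → ℝ) (hN : Nondecr1 N)
    (hdich : ∀ t s : ℝ, 0 ≤ s → s ≤ t → ∀ x : X,
      h t * ‖U t s (P s x)‖ ≤ N s * (h s * ‖P s x‖) ∧
      k t * ‖x - P s x‖ ≤ N t * (k s * ‖U t s (x - P s x)‖)) :
    ∀ t s : ℝ, 0 ≤ s → s ≤ t → ∀ x : X,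
      h t * lyapG U V P h k t (U t s (P s x)) ≤ N s * (h s * lyapG U V P h k s (P s x)) ∧
      k t * lyapG U V P h k s (V t s (x - P t x)) ≤
        N t * (k s * lyapG U V P h k t (x - P t x)) := by
  intro t s hs hst x
  have ht : 0 ≤ t := hs.trans hst
  have hPP : ∀ r, 0 ≤ r → ∀ y, P r (P r y) = P r y := fun r hr y =>
    DFunLike.congr_fun (hP r hr) y
  constructor
  · have hPU : P t (U t s (P s x)) = U t s (P s x) := by
      rw [← hC.1 t s hs hst, hPP s hs]
    have hforward : ∀ τ, s ≤ τ → h τ * ‖U τ s (P s x)‖ ≤ N s * (h s * ‖P s x‖) :=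
      fun τ hτ => (hdich τ s hs hτ x).1
    have hnorm : ‖P s x‖ ≤ lyapG U V P h k s (P s x) := by
      rw [lyapG_of_apply_eq_self U V P h k (hPP s hs x)]
      have hbdd : BddAbove (range fun τ : Ici s =>
          (h s / h (τ : ℝ)) * ‖U (τ : ℝ) s (P s x)‖) := by
        refine ⟨N s * (h s * ‖P s x‖) / h s, ?_⟩
        rintro _ ⟨⟨τ, hτ⟩, rfl⟩
        rw [le_div_iff₀' (hh.pos hs)]
        exact mul_div_mul_le_of_le (hh.pos hs).le (hh.pos (hs.trans hτ)) (norm_nonneg _)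
          (hh.mono hs hτ) (hforward τ hτ)
      refine le_trans (le_of_eq ?_) (le_ciSup hbdd ⟨s, le_refl s⟩)
      simp [hU.1 s hs, (hh.pos hs).ne']
    calc h t * lyapG U V P h k t (U t s (P s x)) ≤ N s * (h s * ‖P s x‖) := by
          rw [lyapG_of_apply_eq_self U V P h k hPU, ← le_div_iff₀' (hh.pos ht)]
          refine ciSup_le fun ⟨τ, hτ⟩ => ?_
          rw [le_div_iff₀' (hh.pos ht)]
          have hUU : U τ t (U t s (P s x)) = U τ s (P s x) := by
            rw [hU.2 τ t s hs hst hτ, ContinuousLinearMap.comp_apply]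
          simp only [hUU]
          exact mul_div_mul_le_of_le (hh.pos ht).le (hh.pos (ht.trans hτ)) (norm_nonneg _)
            (hh.mono ht hτ) (hforward τ (hst.trans hτ))
      _ ≤ N s * (h s * lyapG U V P h k s (P s x)) := by
          have hNs := hN.2 s hs
          have hhs := hh.pos hs
          gcongr
  · have hPQ : P t (x - P t x) = 0 := by rw [map_sub, hPP t ht, sub_self]
    have hPV : ∀ τ, 0 ≤ τ → τ ≤ t → P τ (V t τ (x - P t x)) = 0 := fun τ h0 hτ =>
      sub_eq_self.1 (hv4 t τ h0 hτ x).symm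
    have hbackward : ∀ τ, 0 ≤ τ → τ ≤ t →
        k t * ‖V t τ (x - P t x)‖ ≤ N t * (k τ * ‖x - P t x‖) := fun τ h0 hτ => by
      have := (hdich t τ h0 hτ (V t τ (x - P t x))).2
      rwa [hPV τ h0 hτ, sub_zero, hv1 t τ h0 hτ] at this
    have hNt : 0 < N t := zero_lt_one.trans_le (hN.2 t ht)
    have hweighted : ∀ r τ, 0 ≤ τ → τ ≤ r → r ≤ t →
        k τ / k r * ‖V t τ (x - P t x)‖ ≤ N t * (k r * ‖x - P t x‖) / k t := by
      intro r τ h0 hτr hrt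
      have hkr := hk.pos (h0.trans hτr)
      have hkτ := hk.pos h0
      have hdiv : k τ / k r ≤ 1 := (div_le_one hkr).2 (hk.mono h0 hτr)
      rw [le_div_iff₀' (hk.pos ht)]
      calc k t * (k τ / k r * ‖V t τ (x - P t x)‖)
          = k τ / k r * (k t * ‖V t τ (x - P t x)‖) := by ring
        _ ≤ 1 * (N t * (k τ * ‖x - P t x‖)) := by
            have := hbackward τ h0 (hτr.trans hrt)
            have := hk.pos ht
            gcongr
        _ ≤ N t * (k r * ‖x - P t x‖) := by
            rw [one_mul]
            gcongr
            exact hk.mono h0 hτr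
    have hnorm : ‖x - P t x‖ ≤ lyapG U V P h k t (x - P t x) := by
      rw [lyapG_of_apply_eq_zero U V P h k hPQ]
      have hbdd : BddAbove (range fun τ : Icc (0 : ℝ) t =>
          (k (τ : ℝ) / k t) * ‖V t (τ : ℝ) (x - P t x)‖) := by
        refine ⟨N t * (k t * ‖x - P t x‖) / k t, ?_⟩
        rintro _ ⟨⟨τ, h0, hτ⟩, rfl⟩
        exact hweighted t τ h0 hτ le_rfl
      have hVt : V t t (x - P t x) = x - P t x := by
        have := hv1 t t ht le_rfl x
        rwa [hU.1 t ht, ContinuousLinearMap.id_apply] at this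
      refine le_trans (le_of_eq ?_) (le_ciSup hbdd ⟨t, ht, le_refl t⟩)
      simp only [hVt, div_self (hk.pos ht).ne', one_mul]
    calc k t * lyapG U V P h k s (V t s (x - P t x)) ≤ N t * (k s * ‖x - P t x‖) := by
          rw [lyapG_of_apply_eq_zero U V P h k (hPV s hs hst), ← le_div_iff₀' (hk.pos ht)]
          have : Nonempty (Icc (0 : ℝ) s) := ⟨⟨s, hs, le_rfl⟩⟩
          refine ciSup_le fun ⟨τ, h0, hτ⟩ => ?_
          simp only [← hv3 t s τ h0 hτ hst x]
          exact hweighted s τ h0 hτ hst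
      _ ≤ N t * (k s * lyapG U V P h k t (x - P t x)) := by
          have hks := hk.pos hs
          gcongr
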